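/- arXiv:2210.15786 — 4 statements merged into one kernel-verified Lean document; each statement's English description precedes it below -/
import Mathlib

section
/- Let ρ > 0 (a constant density), τ > 0, R_s > 0, β ∈ [0, 1/√2], and R_o = β·R_s. Suppose t* > 0 satisfies cosh(t*) = √2·cosh(β·t*). If √τ·R_s > 2√ρ·t*, then 1/cosh(√(τ/ρ)·R_s/2) < 1/(√2·cosh(√(τ/ρ)·R_o/2)); that is, the minimum acquisition value on the similarly labeled interval is strictly smaller than the minimum acquisition value on the oppositely labeled interval. -/
open Real

/-!
Put `z = √(τ/ρ) · Rs / 2`; the hypothesis on `τ` says exactly that `z > tstar`, and the claim is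
`√2 · cosh (β z) < cosh z`. Equality holds at `z = tstar`, so it suffices that
`cosh z / cosh (β z)` is strictly increasing in `z > 0` when `0 ≤ β < 1`. In cross-multiplied form
this follows from the product-to-sum formula for `cosh` and the monotonicity of `cosh` in the
absolute value of its argument (`cosh_mul_cosh_lt`).
-/

/-- Strict monotonicity of `z ↦ cosh z / cosh (β z)` on the positive half-line, cross-multiplied.
By product-to-sum it reduces to `|t + β z| < z + β t` and `|t - β z| < z - β t`. -/
lemma cosh_mul_cosh_lt {β t z : ℝ} (h0 : 0 ≤ β) (h1 : β < 1) (ht : 0 < t) (hz : t < z) :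
    Real.cosh t * Real.cosh (β * z) < Real.cosh z * Real.cosh (β * t) := by
  have hβt : 0 ≤ β * t := by positivity
  have hβz : 0 ≤ β * z := mul_nonneg h0 (ht.trans hz).le
  have hd : 0 < (1 - β) * (z - t) := mul_pos (by linarith) (by linarith)
  have hs : 0 < (1 - β) * (z + t) := mul_pos (by linarith) (by linarith)
  have hp : 0 < (1 + β) * (z - t) := mul_pos (by linarith) (by linarith)
  have hsum : Real.cosh (t + β * z) < Real.cosh (z + β * t) := by
    rw [Real.cosh_lt_cosh, abs_of_nonneg (by linarith), abs_of_nonneg (by linarith)]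
    linarith
  have hdiff : Real.cosh (t - β * z) < Real.cosh (z - β * t) := by
    rw [Real.cosh_lt_cosh]
    refine lt_of_lt_of_le (abs_lt.2 ⟨?_, ?_⟩) (le_abs_self _) <;> linarith
  rw [Real.cosh_add, Real.cosh_add] at hsum
  rw [Real.cosh_sub, Real.cosh_sub] at hdiff
  linarith

/-- Proposition 3.2 / exploration requirement on τ, constant density:
if `√τ·R_s > 2√ρ·t*`, the minimum acquisition value on the similarly labeled interval is
strictly smaller than on the oppositely labeled interval. -/
theorem exploration_requirement_constant_density
    (ρ τ Rs β Ro tstar : ℝ) (hρ : 0 < ρ) (hτ : 0 < τ) (hRs : 0 < Rs)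
    (hβ : β ∈ Set.Icc 0 (1 / Real.sqrt 2)) (hRo : Ro = β * Rs)
    (htpos : 0 < tstar)
    (hroot : Real.cosh tstar = Real.sqrt 2 * Real.cosh (β * tstar))
    (hcond : 2 * Real.sqrt ρ * tstar < Real.sqrt τ * Rs) :
    1 / Real.cosh (Real.sqrt (τ / ρ) * (Rs / 2))
      < 1 / (Real.sqrt 2 * Real.cosh (Real.sqrt (τ / ρ) * (Ro / 2))) := by
  have hβ1 : β < 1 := by
    refine hβ.2.trans_lt ?_
    rw [div_lt_one (by positivity)]
    exact Real.lt_sqrt_of_sq_lt (by norm_num)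
  have hz : tstar < Real.sqrt (τ / ρ) * (Rs / 2) := by
    rw [Real.sqrt_div hτ.le, div_mul_eq_mul_div, lt_div_iff₀ (by positivity)]
    linarith
  have hRo' : Real.sqrt (τ / ρ) * (Ro / 2) = β * (Real.sqrt (τ / ρ) * (Rs / 2)) := by
    rw [hRo]; ring
  rw [hRo']
  have hkey := cosh_mul_cosh_lt hβ.1 hβ1 htpos hz
  rw [hroot, mul_right_comm] at hkey
  exact one_div_lt_one_div_of_lt (mul_pos (by positivity) (Real.cosh_pos _))
    (lt_of_mul_lt_mul_right hkey (Real.cosh_pos _).le)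
end

section
/- Let ρ > 0 (a constant density), R_s > 0, β > 0, and R_o = β·R_s. If 0 ≤ τ ≤ 2ρ/R_s², then 1/cosh(√(τ/ρ)·R_s/2) > 1/(√2·cosh(√(τ/ρ)·R_o/2)); that is, when τ is too small relative to R_s, the minimum acquisition value on the similarly labeled interval exceeds the minimum acquisition value on the oppositely labeled interval, regardless of β. -/
/-!
Put `x = √(τ/ρ) * Rs / 2`. The bound on `τ` says exactly that `x ^ 2 ≤ 1 / 2`, so
`cosh x ≤ exp (x ^ 2 / 2) ≤ exp (1 / 4) < √2`, the last step because `e < 4`.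
Since `cosh ≥ 1`, the other denominator is at least `√2`, whatever `β` is.
-/

theorem exp_quarter_lt_sqrt_two : Real.exp (1 / 4) < Real.sqrt 2 := by
  have h4 : Real.exp (1 / 4) ^ 4 = Real.exp 1 := by
    rw [← Real.exp_nat_mul]; norm_num
  apply Real.lt_sqrt_of_sq_lt
  nlinarith [Real.exp_one_lt_d9, sq_nonneg (Real.exp (1 / 4))]

/-- Proposition: exploitation default when τ is too small: if
`0 ≤ τ ≤ 2ρ/R_s²`, the minimum acquisition value on the similarly labeled interval exceeds
that on the oppositely labeled interval, regardless of `β > 0`. -/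
theorem exploitation_default_small_tau
    (ρ Rs β Ro τ : ℝ) (hρ : 0 < ρ) (hRs : 0 < Rs) (hβ : 0 < β) (hRo : Ro = β * Rs)
    (hτ0 : 0 ≤ τ) (hτ : τ ≤ 2 * ρ / Rs ^ 2) :
    1 / (Real.sqrt 2 * Real.cosh (Real.sqrt (τ / ρ) * (Ro / 2)))
      < 1 / Real.cosh (Real.sqrt (τ / ρ) * (Rs / 2)) := by
  have hx : (Real.sqrt (τ / ρ) * (Rs / 2)) ^ 2 ≤ 1 / 2 := by
    rw [mul_pow, Real.sq_sqrt (div_nonneg hτ0 hρ.le)]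
    rw [le_div_iff₀ (by positivity)] at hτ
    have h : τ / ρ * Rs ^ 2 ≤ 2 := by
      rw [div_mul_eq_mul_div, div_le_iff₀ hρ]
      exact hτ
    linarith
  apply one_div_lt_one_div_of_lt (Real.cosh_pos _)
  calc Real.cosh (Real.sqrt (τ / ρ) * (Rs / 2))
      ≤ Real.exp ((Real.sqrt (τ / ρ) * (Rs / 2)) ^ 2 / 2) := Real.cosh_le_exp_half_sq _
    _ ≤ Real.exp (1 / 4) := Real.exp_le_exp.mpr (by linarith)
    _ < Real.sqrt 2 := exp_quarter_lt_sqrt_two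
    _ ≤ Real.sqrt 2 * Real.cosh (Real.sqrt (τ / ρ) * (Ro / 2)) :=
      le_mul_of_one_le_right (Real.sqrt_nonneg 2) (Real.one_le_cosh _)
end

section
/- Let R > 0, let ρ : [0,R] → ℝ be C¹ with ρ > 0 everywhere, and let τ > 0. Let u ∈ C²([0,R]) solve the 1D PWLL-0 ODE on (0,R) (i.e., (ρ²u')' = 0) with u(0) = 1 and u(R) = 0, and let u_τ ∈ C²([0,R]) solve the 1D PWLL-τ ODE on (0,R) with u_τ(0) = 1 and u_τ(R) = 0. Then u(x) ≥ u_τ(x) for all x ∈ [0,R]. -/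
/-! The proof rests on a weak maximum principle: if `w ≤ 0` at both endpoints and
`(ρ² w')' ≥ 0` wherever `w > 0`, then `w ≤ 0`. At a positive interior maximum `c` the flux
`ρ² w'` vanishes; up to the first zero `d` of `w` after `c` the flux is nondecreasing, hence
nonnegative, so `w` is nondecreasing on `[c, d]`, contradicting `0 < w c` and `w d ≤ 0`.
Applied to `-uτ` this gives `uτ ≥ 0`. Then `(ρ² (uτ - u)')' = τ ρ uτ ≥ 0`, and a second
application, to `uτ - u`, gives the claim. -/

/-- `u` solves the 1D PWLL-τ ODE `(ρ² u')' = τ ρ u` on `(a, b)`. -/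
def Solves1D (ρ : ℝ → ℝ) (τ : ℝ) (u : ℝ → ℝ) (a b : ℝ) : Prop :=
  ∀ x ∈ Set.Ioo a b, deriv (fun y => ρ y ^ 2 * deriv u y) x = τ * ρ x * u x

/-- Weak maximum principle. Differentiability of the flux `ρ² w'` is assumed separately, so that
the sign condition on its derivative carries information. -/
theorem weak_max_principle {R : ℝ} (hR : 0 < R) {ρ w : ℝ → ℝ}
    (hρ : ∀ x ∈ Set.Ioo 0 R, 0 < ρ x) (hwc : ContinuousOn w (Set.Icc 0 R))
    (hF : ∀ x ∈ Set.Ioo 0 R, DifferentiableAt ℝ (fun y => ρ y ^ 2 * deriv w y) x)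
    (hF' : ∀ x ∈ Set.Ioo 0 R, 0 < w x → 0 ≤ deriv (fun y => ρ y ^ 2 * deriv w y) x)
    (hwd : ∀ x ∈ Set.Ioo 0 R, DifferentiableAt ℝ w x)
    (h0 : w 0 ≤ 0) (h1 : w R ≤ 0) : ∀ x ∈ Set.Icc 0 R, w x ≤ 0 := by
  obtain ⟨c, hc, hmax⟩ := isCompact_Icc.exists_isMaxOn (Set.nonempty_Icc.2 hR.le) hwc
  intro x hx
  refine (hmax hx).trans ?_
  by_contra! hpos
  have hc0 : 0 < c := lt_of_le_of_ne hc.1 (by rintro rfl; linarith)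
  have hcR : c < R := lt_of_le_of_ne hc.2 (by rintro rfl; linarith)
  have hdc : deriv w c = 0 := (hmax.isLocalMax (Icc_mem_nhds hc0 hcR)).deriv_eq_zero
  -- `d` is the first point of `[c, R]` at which `w ≤ 0`.
  have hcont : ContinuousOn w (Set.Icc c R) := hwc.mono (Set.Icc_subset_Icc_left hc0.le)
  have hcl : IsCompact (Set.Icc c R ∩ w ⁻¹' Set.Iic 0) :=
    isCompact_Icc.of_isClosed_subset (hcont.preimage_isClosed_of_isClosed isClosed_Icc isClosed_Iic)
      Set.inter_subset_left
  obtain ⟨d, ⟨hd, hwd0⟩, hdmin⟩ := hcl.exists_isLeast ⟨R, ⟨hcR.le, le_rfl⟩, h1⟩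
  have hwd0 : w d ≤ 0 := hwd0
  have hcd : c < d := lt_of_le_of_ne hd.1 (by rintro rfl; linarith)
  have hsub : Set.Ico c d ⊆ Set.Ioo 0 R := fun y hy =>
    ⟨hc0.trans_le hy.1, hy.2.trans_le hd.2⟩
  have hwpos : ∀ y ∈ Set.Ico c d, 0 < w y := by
    intro y hy
    by_contra! h
    exact absurd (hdmin ⟨⟨hy.1, (hsub hy).2.le⟩, h⟩) (not_le.2 hy.2)
  have hmono : MonotoneOn (fun y => ρ y ^ 2 * deriv w y) (Set.Ico c d) := by
    refine monotoneOn_of_deriv_nonneg (convex_Ico c d)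
      (fun y hy => (hF y (hsub hy)).continuousAt.continuousWithinAt)
      (fun y hy => (hF y (hsub (interior_subset hy))).differentiableWithinAt)
      (fun y hy => hF' y (hsub (interior_subset hy)) (hwpos y (interior_subset hy)))
  have hderiv : ∀ y ∈ Set.Ico c d, 0 ≤ deriv w y := by
    intro y hy
    have h := hmono ⟨le_rfl, hcd⟩ hy hy.1
    simp only [hdc, mul_zero] at h
    exact nonneg_of_mul_nonneg_right h (pow_pos (hρ y (hsub hy)) 2)
  have hwm : MonotoneOn w (Set.Icc c d) := by
    refine monotoneOn_of_deriv_nonneg (convex_Icc c d)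
      (hcont.mono (Set.Icc_subset_Icc_right hd.2)) ?_ ?_ <;> rw [interior_Icc]
    · exact fun y hy => (hwd y (hsub (Set.Ioo_subset_Ico_self hy))).differentiableWithinAt
    · exact fun y hy => hderiv y (Set.Ioo_subset_Ico_self hy)
  have := hwm ⟨le_rfl, hcd.le⟩ ⟨hcd.le, le_rfl⟩ hcd.le
  linarith

theorem differentiableAt_flux {R : ℝ} {ρ v : ℝ → ℝ} (hρ : ContDiffOn ℝ 1 ρ (Set.Icc 0 R))
    (hv : ContDiffOn ℝ 2 v (Set.Icc 0 R)) {x : ℝ} (hx : x ∈ Set.Ioo 0 R) :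
    DifferentiableAt ℝ (fun y => ρ y ^ 2 * deriv v y) x := by
  have h1 : DifferentiableAt ℝ ρ x :=
    (hρ.contDiffAt (Icc_mem_nhds hx.1 hx.2)).differentiableAt (by norm_num)
  have h2 : ContDiffOn ℝ 1 (deriv v) (Set.Ioo 0 R) :=
    (hv.mono Set.Ioo_subset_Icc_self).deriv_of_isOpen isOpen_Ioo (by norm_num)
  exact (h1.pow 2).mul
    ((h2.contDiffAt (Ioo_mem_nhds hx.1 hx.2)).differentiableAt (by norm_num))


/-- comparison principle: the τ = 0 solution dominates the τ > 0 solution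
with the same boundary data `u(0) = 1`, `u(R) = 0`. -/
theorem pwll_1d_comparison (R : ℝ) (hR : 0 < R) (ρ : ℝ → ℝ)
    (hρC1 : ContDiffOn ℝ 1 ρ (Set.Icc 0 R)) (hρpos : ∀ x ∈ Set.Icc (0 : ℝ) R, 0 < ρ x)
    (τ : ℝ) (hτ : 0 < τ)
    (u uτ : ℝ → ℝ)
    (huC2 : ContDiffOn ℝ 2 u (Set.Icc 0 R)) (huτC2 : ContDiffOn ℝ 2 uτ (Set.Icc 0 R))
    (hu : Solves1D ρ 0 u 0 R) (hu0 : u 0 = 1) (huR : u R = 0)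
    (huτ : Solves1D ρ τ uτ 0 R) (huτ0 : uτ 0 = 1) (huτR : uτ R = 0) :
    ∀ x ∈ Set.Icc (0 : ℝ) R, uτ x ≤ u x := by
  have hρ : ∀ x ∈ Set.Ioo 0 R, 0 < ρ x := fun x hx => hρpos x (Set.Ioo_subset_Icc_self hx)
  have diff {v : ℝ → ℝ} (hv : ContDiffOn ℝ 2 v (Set.Icc 0 R)) :
      ∀ x ∈ Set.Ioo 0 R, DifferentiableAt ℝ v x := fun x hx =>
    (hv.contDiffAt (Icc_mem_nhds hx.1 hx.2)).differentiableAt (by norm_num)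
  have hnn : ∀ x ∈ Set.Icc 0 R, 0 ≤ uτ x := by
    have key : ∀ x ∈ Set.Icc 0 R, (-uτ) x ≤ 0 := by
      refine weak_max_principle hR hρ huτC2.neg.continuousOn
        (fun x hx => differentiableAt_flux hρC1 huτC2.neg hx) ?_ (diff huτC2.neg)
        (by simp [huτ0]) (by simp [huτR])
      intro x hx hpos
      have e : (fun y => ρ y ^ 2 * deriv (-uτ) y) = fun y => -(ρ y ^ 2 * deriv uτ y) := by
        funext y
        rw [deriv.neg]
        ring
      rw [e, deriv.fun_neg, huτ x hx]
      have hpos : 0 < -uτ x := hpos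
      have := mul_pos (mul_pos hτ (hρ x hx)) hpos
      linarith
    intro x hx
    have : -uτ x ≤ 0 := key x hx
    linarith
  have key : ∀ x ∈ Set.Icc 0 R, (uτ - u) x ≤ 0 := by
    refine weak_max_principle hR hρ (huτC2.sub huC2).continuousOn
      (fun x hx => differentiableAt_flux hρC1 (huτC2.sub huC2) hx) ?_ (diff (huτC2.sub huC2))
      (by simp [huτ0, hu0]) (by simp [huτR, huR])
    intro x hx _
    -- `deriv` is additive only where both functions are differentiable, so the two fluxes
    -- agree near `x` but possibly not globally.
    have e : (fun y => ρ y ^ 2 * deriv (uτ - u) y) =ᶠ[nhds x]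
        fun y => ρ y ^ 2 * deriv uτ y - ρ y ^ 2 * deriv u y := by
      filter_upwards [Ioo_mem_nhds hx.1 hx.2] with y hy
      rw [deriv_sub (diff huτC2 y hy) (diff huC2 y hy)]
      ring
    rw [e.deriv_eq, deriv_fun_sub (differentiableAt_flux hρC1 huτC2 hx)
      (differentiableAt_flux hρC1 huC2 hx), huτ x hx, hu x hx]
    have := mul_nonneg (mul_pos hτ (hρ x hx)).le (hnn x (Set.Ioo_subset_Icc_self hx))
    linarith
  intro x hx
  exact sub_nonpos.1 (key x hx)
end

section
/- For all a > 0 and R > 0, the function g(x) = √(sinh²(a(R−x)) + sinh²(ax)) / sinh(aR) on [0,R] attains its minimum uniquely at x = R/2, and g(R/2) = 1/(√2·cosh(a·R/2)). -/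
/-!
Centre the variable: with `h = aR/2` and `d = a(x - R/2)`, the addition formulas give
`sinh² (h - d) + sinh² (h + d) = 2 sinh² h + 2 (sinh² h + cosh² h) sinh² d`. The last term vanishes
only at `d = 0`, so the midpoint is the unique minimizer, and the minimum value
`√2 sinh h / sinh (2h)` simplifies by `sinh (2h) = 2 sinh h cosh h`.
-/

theorem sinh_sub_sq_add_sinh_add_sq (h d : ℝ) :
    Real.sinh (h - d) ^ 2 + Real.sinh (h + d) ^ 2 =
      2 * Real.sinh h ^ 2 + 2 * (Real.sinh h ^ 2 + Real.cosh h ^ 2) * Real.sinh d ^ 2 := by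
  rw [Real.sinh_sub, Real.sinh_add]
  linear_combination 2 * Real.sinh h ^ 2 * Real.cosh_sq d

/-- for `a, R > 0`, the acquisition function
`g(x) = √(sinh²(a(R−x)) + sinh²(ax)) / sinh(aR)` on `[0,R]` attains its minimum uniquely at
`x = R/2`, with value `1/(√2·cosh(aR/2))`. -/
theorem opposite_labels_acquisition_min (a R : ℝ) (ha : 0 < a) (hR : 0 < R) :
    let g : ℝ → ℝ := fun x =>
      Real.sqrt (Real.sinh (a * (R - x)) ^ 2 + Real.sinh (a * x) ^ 2) / Real.sinh (a * R)
    (∀ x ∈ Set.Icc (0 : ℝ) R, x ≠ R / 2 → g (R / 2) < g x) ∧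
      g (R / 2) = 1 / (Real.sqrt 2 * Real.cosh (a * (R / 2))) := by
  intro g
  have hh : 0 < a * (R / 2) := by positivity
  have hS : 0 < Real.sinh (a * (R / 2)) := Real.sinh_pos_iff.mpr hh
  have hC : 0 < Real.cosh (a * (R / 2)) := Real.cosh_pos _
  have hSR : 0 < Real.sinh (a * R) := Real.sinh_pos_iff.mpr (by positivity)
  have key : ∀ x, g x = Real.sqrt (2 * Real.sinh (a * (R / 2)) ^ 2 +
      2 * (Real.sinh (a * (R / 2)) ^ 2 + Real.cosh (a * (R / 2)) ^ 2) *
        Real.sinh (a * (x - R / 2)) ^ 2) / Real.sinh (a * R) := by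
    intro x
    rw [← sinh_sub_sq_add_sinh_add_sq]
    have e1 : a * (R / 2) - a * (x - R / 2) = a * (R - x) := by ring
    have e2 : a * (R / 2) + a * (x - R / 2) = a * x := by ring
    rw [e1, e2]
  have mid : g (R / 2) = Real.sqrt (2 * Real.sinh (a * (R / 2)) ^ 2) / Real.sinh (a * R) := by
    rw [key]
    simp
  refine ⟨fun x _ hx => ?_, ?_⟩
  · rw [mid, key x]
    have hd : Real.sinh (a * (x - R / 2)) ≠ 0 :=
      Real.sinh_eq_zero.not.mpr (mul_ne_zero ha.ne' (sub_ne_zero.mpr hx))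
    refine div_lt_div_of_pos_right (Real.sqrt_lt_sqrt (by positivity) ?_) hSR
    exact lt_add_of_pos_right _ (by positivity)
  · have e : a * R = 2 * (a * (R / 2)) := by ring
    rw [mid, e, Real.sinh_two_mul, Real.sqrt_mul (by norm_num), Real.sqrt_sq hS.le,
      div_eq_div_iff (by positivity) (by positivity)]
    linear_combination Real.sinh (a * (R / 2)) * Real.cosh (a * (R / 2)) *
      Real.sq_sqrt (show (0 : ℝ) ≤ 2 by norm_num)
end
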